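/- Let N ≥ 1 and K ≥ 1 be integers and let s ∈ ℂ with Re s > −K+1 and s ≠ 1. Then ζ(s) − ∑_{n=1}^{N} n^{−s} = N^{1−s}/(s−1) + ∑_{k=1}^{K} C(s+k−2, k−1)·(B_k/k)·N^{−s−k+1} − C(s+K−1, K) ∫_N^∞ B_K({t}) t^{−s−K} dt, where C(s+k−2, k−1) = (∏_{j=0}^{k−2}(s+j))/(k−1)! and C(s+K−1, K) = (∏_{j=0}^{K−1}(s+j))/K! denote generalized binomial coefficients. -/

import Mathlib

open MeasureTheory Polynomial

/-!
Integrating by parts against the periodised Bernoulli polynomials `B_k({t})` on each `[n, n + 1]`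
and summing over `n ≥ N` gives the Euler–Maclaurin formula on `(N, ∞)` for any function whose
derivatives up to order `K` are integrable there. For `Re s > 1` it applies to `t ↦ t ^ (-s)`. The
remainder integral is a Mellin transform of a bounded function supported away from `0`, hence
holomorphic on `Re s > 1 - K`; after multiplication by `s - 1` so are both sides of the expansion,
and the identity theorem carries it from `Re s > 1` to that half-plane.
-/

open Set Filter Topology
open scoped Nat

section EulerMaclaurin

theorem exists_norm_bernoulliFun_fract_le (k : ℕ) :
    ∃ C, ∀ t : ℝ, ‖bernoulliFun k (Int.fract t)‖ ≤ C := by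
  obtain ⟨C, hC⟩ := isCompact_Icc.exists_bound_of_continuousOn
    (continuous_bernoulliFun k).continuousOn
  exact ⟨C, fun t => hC _ ⟨Int.fract_nonneg t, (Int.fract_lt_one t).le⟩⟩

theorem measurable_bernoulliFun_fract (k : ℕ) :
    Measurable fun t : ℝ => bernoulliFun k (Int.fract t) :=
  (continuous_bernoulliFun k).measurable.comp measurable_fract

variable {E : Type*} [NormedAddCommGroup E] [NormedSpace ℝ E]

theorem integrable_bernoulliFun_fract_smul {μ : Measure ℝ} {f : ℝ → E}
    (hf : Integrable f μ) (k : ℕ) :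
    Integrable (fun t => bernoulliFun k (Int.fract t) • f t) μ := by
  obtain ⟨C, hC⟩ := exists_norm_bernoulliFun_fract_le k
  exact hf.bdd_smul C (measurable_bernoulliFun_fract k).aestronglyMeasurable (ae_of_all _ hC)

theorem intervalIntegral_fract_eq_sub (F : ℝ → ℝ → E) (n : ℕ) :
    ∫ t in (n : ℝ)..(n + 1 : ℕ), F (Int.fract t) t = ∫ t in (n : ℝ)..(n + 1 : ℕ), F (t - n) t := by
  refine intervalIntegral.integral_congr_uIoo fun t ht => ?_
  rw [uIoo_of_le (by simp), mem_Ioo, Nat.cast_succ] at ht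
  have hfloor : ⌊t⌋ = (n : ℤ) := Int.floor_eq_iff.mpr ⟨mod_cast ht.1.le, mod_cast ht.2⟩
  simp only [Int.fract, hfloor, Int.cast_natCast]

theorem uIcc_natCast_succ_subset {a b n : ℕ} (hn : n ∈ Ico a b) :
    uIcc (n : ℝ) (n + 1 : ℕ) ⊆ uIcc (a : ℝ) b := by
  have hab : a ≤ b := hn.1.trans hn.2.le
  rw [uIcc_of_le (by simp), uIcc_of_le (mod_cast hab)]
  exact Icc_subset_Icc (mod_cast hn.1) (mod_cast hn.2)

theorem sum_integral_bernoulliFun_fract_smul {f : ℝ → E} {a b : ℕ} (hab : a ≤ b)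
    (hf : IntervalIntegrable f volume a b) (k : ℕ) :
    ∑ n ∈ Finset.Ico a b, ∫ t in (n : ℝ)..(n + 1 : ℕ), bernoulliFun k (Int.fract t) • f t =
      ∫ t in (a : ℝ)..b, bernoulliFun k (Int.fract t) • f t :=
  intervalIntegral.sum_integral_adjacent_intervals_Ico (a := Nat.cast) hab fun _ hn =>
    have hfn := hf.mono_set (uIcc_natCast_succ_subset hn)
    ⟨integrable_bernoulliFun_fract_smul hfn.1 k, integrable_bernoulliFun_fract_smul hfn.2 k⟩

variable [CompleteSpace E] {f f' : ℝ → E}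

theorem integral_bernoulliFun_fract_smul_unit (k n : ℕ)
    (hf : ∀ t ∈ uIcc (n : ℝ) (n + 1 : ℕ), HasDerivAt f (f' t) t)
    (hf' : IntervalIntegrable f' volume n (n + 1 : ℕ)) :
    ((k : ℝ) + 1) • ∫ t in (n : ℝ)..(n + 1 : ℕ), bernoulliFun k (Int.fract t) • f t =
      bernoulliFun (k + 1) 1 • f (n + 1 : ℕ) - bernoulliFun (k + 1) 0 • f n
        - ∫ t in (n : ℝ)..(n + 1 : ℕ), bernoulliFun (k + 1) (Int.fract t) • f' t := by
  rw [intervalIntegral_fract_eq_sub fun x t => bernoulliFun k x • f t,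
    intervalIntegral_fract_eq_sub fun x t => bernoulliFun (k + 1) x • f' t]
  have hB (t : ℝ) : HasDerivAt (fun t => bernoulliFun (k + 1) (t - n))
      ((k + 1) * bernoulliFun k (t - n)) t := by
    simpa using (hasDerivAt_bernoulliFun (k + 1) (t - n)).comp_sub_const t n
  have hparts := intervalIntegral.integral_smul_deriv_eq_deriv_smul (fun t _ => hB t)
    hf (Continuous.intervalIntegrable (by fun_prop) _ _) hf'
  simp only [mul_smul, intervalIntegral.integral_smul, Nat.cast_succ, add_sub_cancel_left,
    sub_self] at hparts ⊢
  rw [hparts, sub_sub_cancel]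

-- Of the periodised Bernoulli polynomials only the first, `k + 1 = 1`, jumps at the integers; its
-- jumps produce the sum.
theorem integral_bernoulliFun_fract_smul (k : ℕ) {a b : ℕ} (hab : a ≤ b)
    (hf : ∀ t ∈ uIcc (a : ℝ) b, HasDerivAt f (f' t) t)
    (hf' : IntervalIntegrable f' volume a b) :
    ((k : ℝ) + 1) • ∫ t in (a : ℝ)..b, bernoulliFun k (Int.fract t) • f t =
      (bernoulli (k + 1) : ℝ) • (f b - f a) + (if k = 0 then ∑ n ∈ Finset.Ioc a b, f n else 0)
        - ∫ t in (a : ℝ)..b, bernoulliFun (k + 1) (Int.fract t) • f' t := by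
  have hfint : IntervalIntegrable f volume a b :=
    ContinuousOn.intervalIntegrable fun t ht => (hf t ht).continuousAt.continuousWithinAt
  have hunit : ∀ n ∈ Finset.Ico a b, _ := fun n hn =>
    have hsub := uIcc_natCast_succ_subset (Finset.mem_Ico.mp hn)
    integral_bernoulliFun_fract_smul_unit k n (fun t ht => hf t (hsub ht)) (hf'.mono_set hsub)
  have hjump : ∑ n ∈ Finset.Ico a b, (if k = 0 then f (n + 1 : ℕ) else 0) =
      if k = 0 then ∑ n ∈ Finset.Ioc a b, f n else 0 := by
    rw [Finset.sum_ite_irrel, Finset.sum_const_zero, Finset.sum_Ico_add' (fun n : ℕ => f n),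
      Finset.Ico_add_one_add_one_eq_Ioc]
  rw [← sum_integral_bernoulliFun_fract_smul hab hfint, Finset.smul_sum,
    Finset.sum_congr rfl hunit, Finset.sum_sub_distrib,
    sum_integral_bernoulliFun_fract_smul hab hf', ← hjump,
    ← Finset.sum_Ico_sub (fun n : ℕ => f n) hab, Finset.smul_sum, ← Finset.sum_add_distrib]
  congr 1
  refine Finset.sum_congr rfl fun n _ => ?_
  rw [bernoulliFun_eval_one, bernoulliFun_eval_zero, add_smul, ite_zero_smul, one_smul, smul_sub]
  simp only [Nat.add_eq_right, sub_add_eq_add_sub]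

variable {N : ℕ}

theorem tendsto_ite_sum_Ioc_bernoulliFun (k : ℕ)
    (hf : ∀ t ∈ Ici (N : ℝ), HasDerivAt f (f' t) t) (hfi : IntegrableOn f (Ioi (N : ℝ)))
    (hf'i : IntegrableOn f' (Ioi (N : ℝ))) :
    Tendsto (fun M => if k = 0 then ∑ n ∈ Finset.Ioc N M, f n else 0) atTop
      (𝓝 (((k : ℝ) + 1) • (∫ t in Ioi (N : ℝ), bernoulliFun k (Int.fract t) • f t)
        + (bernoulli (k + 1) : ℝ) • f N
        + ∫ t in Ioi (N : ℝ), bernoulliFun (k + 1) (Int.fract t) • f' t)) := by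
  have hcast : Tendsto (fun M : ℕ => (M : ℝ)) atTop atTop := tendsto_natCast_atTop_atTop
  have hint (j : ℕ) {g : ℝ → E} (hg : IntegrableOn g (Ioi (N : ℝ))) :=
    intervalIntegral_tendsto_integral_Ioi (N : ℝ) (integrable_bernoulliFun_fract_smul hg j) hcast
  have hf_zero : Tendsto (fun M : ℕ => f M) atTop (𝓝 0) :=
    (tendsto_zero_of_hasDerivAt_of_integrableOn_Ioi
      (fun t ht => hf t (Ioi_subset_Ici_self ht)) hf'i hfi).comp hcast
  have hlim := (((hint k hfi).const_smul ((k : ℝ) + 1)).sub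
    ((hf_zero.sub_const (f N)).const_smul (bernoulli (k + 1) : ℝ))).add (hint (k + 1) hf'i)
  rw [zero_sub, smul_neg, sub_neg_eq_add] at hlim
  refine hlim.congr' ?_
  filter_upwards [eventually_ge_atTop N] with M hNM
  have hNM' : (N : ℝ) ≤ M := mod_cast hNM
  rw [integral_bernoulliFun_fract_smul k hNM
    (fun t ht => hf t (by rw [uIcc_of_le hNM'] at ht; exact ht.1))
    ((intervalIntegrable_iff_integrableOn_Ioc_of_le hNM').mpr
      (hf'i.mono_set Ioc_subset_Ioi_self))]
  abel

theorem integral_Ioi_bernoulliFun_fract_smul {k : ℕ} (hk : k ≠ 0)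
    (hf : ∀ t ∈ Ici (N : ℝ), HasDerivAt f (f' t) t) (hfi : IntegrableOn f (Ioi (N : ℝ)))
    (hf'i : IntegrableOn f' (Ioi (N : ℝ))) :
    ((k : ℝ) + 1) • ∫ t in Ioi (N : ℝ), bernoulliFun k (Int.fract t) • f t =
      -((bernoulli (k + 1) : ℝ) • f N)
        - ∫ t in Ioi (N : ℝ), bernoulliFun (k + 1) (Int.fract t) • f' t := by
  have hlim := tendsto_ite_sum_Ioc_bernoulliFun k hf hfi hf'i
  simp only [if_neg hk] at hlim
  have hzero := tendsto_nhds_unique hlim tendsto_const_nhds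
  rw [eq_sub_iff_add_eq, eq_neg_iff_add_eq_zero, add_right_comm, hzero]

theorem tendsto_sum_Ioc_eulerMaclaurin {F : ℕ → ℝ → E} {K : ℕ} (hK : 1 ≤ K)
    (hF : ∀ k < K, ∀ t ∈ Ici (N : ℝ), HasDerivAt (F k) (F (k + 1) t) t)
    (hFi : ∀ k ≤ K, IntegrableOn (F k) (Ioi (N : ℝ))) :
    Tendsto (fun M => ∑ n ∈ Finset.Ioc N M, F 0 n) atTop (𝓝 ((∫ t in Ioi (N : ℝ), F 0 t)
      + ∑ k ∈ Finset.range K, ((-1) ^ k * (bernoulli (k + 1) : ℚ) / (k + 1)! : ℝ) • F k N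
      - ((-1) ^ K / K ! : ℝ) •
          ∫ t in Ioi (N : ℝ), bernoulliFun K (Int.fract t) • F K t)) := by
  induction K, hK using Nat.le_induction with
  | base =>
    simpa using tendsto_ite_sum_Ioc_bernoulliFun 0 (hF 0 one_pos) (hFi 0 zero_le_one) (hFi 1 le_rfl)
  | succ K hK ih =>
    have hstep := integral_Ioi_bernoulliFun_fract_smul (Nat.one_le_iff_ne_zero.mp hK)
      (hF K K.lt_succ_self) (hFi K K.le_succ) (hFi (K + 1) le_rfl)
    convert! ih (fun k hk => hF k (hk.trans K.lt_succ_self))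
      (fun k hk => hFi k (hk.trans K.le_succ)) using 2
    have hfac : ((-1) ^ K / K ! : ℝ) = (-1) ^ K / (K + 1)! * (K + 1) := by
      rw [Nat.factorial_succ]; push_cast; field_simp
    rw [Finset.sum_range_succ, hfac, mul_smul, hstep]
    module

end EulerMaclaurin

theorem differentiableAt_integral_Ioi_cpow_smul {E : Type*} [NormedAddCommGroup E]
    [NormedSpace ℂ E] {f : ℝ → E} {a c : ℝ} {z : ℂ} (ha : 0 < a) (hf : LocallyIntegrable f)
    (hfO : f =O[atTop] fun t => t ^ (-c)) (hz : z.re < c) :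
    DifferentiableAt ℂ (fun z => ∫ t in Ioi a, (t : ℂ) ^ (z - 1) • f t) z := by
  have hmellin : mellin ((Ioi a).indicator f) = fun z => ∫ t in Ioi a, (t : ℂ) ^ (z - 1) • f t := by
    ext w
    simp only [mellin, ← indicator_smul]
    rw [setIntegral_indicator measurableSet_Ioi, Ioi_inter_Ioi, sup_of_le_right ha.le]
  have hbot : (Ioi a).indicator f =ᶠ[𝓝[>] 0] 0 := by
    filter_upwards [mem_nhdsWithin_of_mem_nhds (Iio_mem_nhds ha)] with t ht
    exact indicator_of_notMem (not_lt.mpr ht.le) f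
  have htop : (Ioi a).indicator f =ᶠ[atTop] f := by
    filter_upwards [Ioi_mem_atTop a] with t ht using indicator_of_mem ht f
  rw [← hmellin]
  exact mellin_differentiableAt_of_isBigO_rpow
    ((hf.indicator measurableSet_Ioi).locallyIntegrableOn _) (htop.trans_isBigO hfO) hz
    (hbot.trans_isBigO (Asymptotics.isBigO_zero _ _)) (sub_one_lt z.re)

section Zeta

/-- The `k`-th derivative of `t ↦ t ^ (-s)` on `(0, ∞)`. -/
noncomputable def cpowNegDeriv (s : ℂ) (k : ℕ) (t : ℝ) : ℂ :=
  (-1) ^ k * (∏ j ∈ Finset.range k, (s + j)) * (t : ℂ) ^ (-s - k)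

theorem hasDerivAt_cpowNegDeriv {s : ℂ} {k : ℕ} {t : ℝ} (hs : s + k ≠ 0) (ht : t ≠ 0) :
    HasDerivAt (cpowNegDeriv s k) (cpowNegDeriv s (k + 1) t) t := by
  have hexp : -s - k ≠ 0 := by rwa [← neg_add', neg_ne_zero]
  convert! (hasDerivAt_ofReal_cpow_const ht hexp).const_mul
    ((-1) ^ k * ∏ j ∈ Finset.range k, (s + j)) using 1
  rw [cpowNegDeriv, Finset.prod_range_succ, Nat.cast_succ, ← sub_sub]
  ring

theorem neg_one_pow_mul_cpowNegDeriv (s : ℂ) (k : ℕ) (t : ℝ) :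
    (-1) ^ k * cpowNegDeriv s k t = (∏ j ∈ Finset.range k, (s + j)) * (t : ℂ) ^ (-s - k) := by
  rw [cpowNegDeriv, mul_assoc, ← mul_assoc, ← mul_pow, neg_one_mul, neg_neg, one_pow, one_mul]

theorem integrableOn_cpowNegDeriv {s : ℂ} (hs : 1 < s.re) (k : ℕ) {a : ℝ} (ha : 0 < a) :
    IntegrableOn (cpowNegDeriv s k) (Ioi a) := by
  refine (integrableOn_Ioi_cpow_of_lt ?_ ha).const_mul _
  simp only [Complex.sub_re, Complex.neg_re, Complex.natCast_re]
  linarith [k.cast_nonneg (α := ℝ)]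

theorem integral_Ioi_cpowNegDeriv_zero {s : ℂ} (hs : 1 < s.re) {a : ℝ} (ha : 0 < a) :
    ∫ t in Ioi a, cpowNegDeriv s 0 t = (a : ℂ) ^ (1 - s) / (s - 1) := by
  simp only [cpowNegDeriv, pow_zero, Finset.range_zero, Finset.prod_empty, one_mul,
    Nat.cast_zero, sub_zero]
  rw [integral_Ioi_cpow_of_lt (by simpa using hs) ha, neg_add_eq_sub, ← neg_sub s 1,
    neg_div_neg_eq]

theorem bernoulli_smul_cpowNegDeriv (s : ℂ) (k : ℕ) (t : ℝ) :
    ((-1) ^ k * (bernoulli (k + 1) : ℚ) / (k + 1)! : ℝ) • cpowNegDeriv s k t =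
      ((∏ j ∈ Finset.range k, (s + j)) / k !) * (((bernoulli (k + 1) : ℚ) : ℂ) / (k + 1 : ℕ))
        * (t : ℂ) ^ (-s - k) := by
  rw [Complex.real_smul, Nat.factorial_succ]
  push_cast
  rw [← div_div]
  linear_combination
    ((bernoulli (k + 1) : ℚ) / (k + 1) / k ! : ℂ) * neg_one_pow_mul_cpowNegDeriv s k t

theorem smul_integral_bernoulliFun_fract_smul_cpowNegDeriv (s : ℂ) (k : ℕ) (μ : Measure ℝ) :
    ((-1) ^ k / k ! : ℝ) • ∫ t, bernoulliFun k (Int.fract t) • cpowNegDeriv s k t ∂μ =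
      ((∏ j ∈ Finset.range k, (s + j)) / k !)
        * ∫ t, (bernoulliFun k (Int.fract t) : ℂ) * (t : ℂ) ^ (-s - k) ∂μ := by
  rw [← integral_smul, ← integral_const_mul]
  congr 1 with t
  rw [Complex.real_smul, Complex.real_smul]
  push_cast
  linear_combination
    (bernoulliFun k (Int.fract t) / k ! : ℂ) * neg_one_pow_mul_cpowNegDeriv s k t

theorem tendsto_sum_Ioc_cpow_neg {s : ℂ} (hs : 1 < s.re) (N : ℕ) :
    Tendsto (fun M => ∑ n ∈ Finset.Ioc N M, (n : ℂ) ^ (-s)) atTop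
      (𝓝 (riemannZeta s - ∑ n ∈ Finset.Icc 1 N, (n : ℂ) ^ (-s))) := by
  have hsum : HasSum (fun n : ℕ => (n : ℂ) ^ (-s)) (riemannZeta s) := by
    simp_rw [zeta_eq_tsum_one_div_nat_cpow hs, Complex.cpow_neg, ← one_div]
    exact (Complex.summable_one_div_nat_cpow.mpr hs).hasSum
  have hrange (M : ℕ) : ∑ n ∈ Finset.range (M + 1), (n : ℂ) ^ (-s) =
      ∑ n ∈ Finset.Ioc 0 M, (n : ℂ) ^ (-s) := by
    rw [Finset.range_eq_Ico, Finset.sum_eq_sum_Ico_succ_bot M.succ_pos, Nat.cast_zero,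
      Complex.zero_cpow (neg_ne_zero.mpr (Complex.ne_zero_of_one_lt_re hs)), zero_add,
      Nat.succ_eq_add_one, Finset.Ico_add_one_add_one_eq_Ioc]
  refine ((hsum.tendsto_sum_nat.comp (tendsto_add_atTop_nat 1)).sub_const _).congr' ?_
  filter_upwards [eventually_ge_atTop N] with M hNM
  rw [sub_eq_iff_eq_add', Function.comp_apply, hrange,
    ← Finset.sum_Ioc_consecutive _ N.zero_le hNM, ← Finset.Icc_add_one_left_eq_Ioc 0 N,
    zero_add]

/-- All terms of the Euler–Maclaurin expansion of `∑ n > N, n ^ (-s)` of order `K` but the polar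
one, `N ^ (1 - s) / (s - 1)`. -/
noncomputable def zetaTailCorrection (N K : ℕ) (s : ℂ) : ℂ :=
  (∑ k ∈ Finset.Icc 1 K, ((∏ j ∈ Finset.range (k - 1), (s + j)) / (k - 1)!)
      * (((bernoulli k : ℚ) : ℂ) / k) * (N : ℂ) ^ (-s - k + 1))
    - ((∏ j ∈ Finset.range K, (s + j)) / K !)
      * ∫ t in Ioi (N : ℝ), (bernoulliFun K (Int.fract t) : ℂ) * (t : ℂ) ^ (-s - K)

theorem riemannZeta_sub_sum_Icc_eq_of_one_lt_re {N K : ℕ} (hN : 1 ≤ N) (hK : 1 ≤ K) {s : ℂ}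
    (hs : 1 < s.re) :
    riemannZeta s - ∑ n ∈ Finset.Icc 1 N, (n : ℂ) ^ (-s) =
      (N : ℂ) ^ (1 - s) / (s - 1) + zetaTailCorrection N K s := by
  have hN0 : (0 : ℝ) < N := mod_cast hN
  have hsk (k : ℕ) : s + k ≠ 0 := Complex.ne_zero_of_one_lt_re (by
    simp only [Complex.add_re, Complex.natCast_re]; linarith [k.cast_nonneg (α := ℝ)])
  have hlim := tendsto_sum_Ioc_eulerMaclaurin (F := cpowNegDeriv s) hK
    (fun k _ t ht => hasDerivAt_cpowNegDeriv (hsk k) (hN0.trans_le ht).ne')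
    (fun k _ => integrableOn_cpowNegDeriv hs k hN0)
  have hzeta := tendsto_nhds_unique (tendsto_sum_Ioc_cpow_neg hs N)
    (hlim.congr fun M => by simp [cpowNegDeriv])
  rw [hzeta, integral_Ioi_cpowNegDeriv_zero hs hN0,
    smul_integral_bernoulliFun_fract_smul_cpowNegDeriv, zetaTailCorrection,
    ← Finset.Ico_add_one_right_eq_Icc, Finset.sum_Ico_eq_sum_range, add_sub_assoc]
  have hexp (k : ℕ) : -s - (k + 1 : ℕ) + 1 = -s - k := by push_cast; ring
  simp only [bernoulli_smul_cpowNegDeriv, Nat.add_sub_cancel, add_comm 1, hexp,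
    Complex.ofReal_natCast]

theorem differentiable_natCast_cpow {n : ℕ} (hn : n ≠ 0) {g : ℂ → ℂ} (hg : Differentiable ℂ g) :
    Differentiable ℂ fun z => (n : ℂ) ^ g z :=
  fun z => (hg z).const_cpow (Or.inl (mod_cast hn))

theorem differentiableAt_integral_Ioi_bernoulliFun_fract_mul_cpow {a : ℝ} (ha : 0 < a) {k : ℕ}
    {s : ℂ} (hs : -(k : ℝ) + 1 < s.re) :
    DifferentiableAt ℂ
      (fun z : ℂ => ∫ t in Ioi a, (bernoulliFun k (Int.fract t) : ℂ) * (t : ℂ) ^ (-z - k)) s := by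
  obtain ⟨C, hC⟩ : ∃ C, ∀ t : ℝ, ‖(bernoulliFun k (Int.fract t) : ℂ)‖ ≤ C := by
    simpa using exists_norm_bernoulliFun_fract_le k
  have hloc : LocallyIntegrable fun t : ℝ => (bernoulliFun k (Int.fract t) : ℂ) :=
    (locallyIntegrable_const C).mono
      (Complex.measurable_ofReal.comp (measurable_bernoulliFun_fract k)).aestronglyMeasurable
      (ae_of_all _ fun t => (hC t).trans (le_abs_self C))
  have hbdd : (fun t : ℝ => (bernoulliFun k (Int.fract t) : ℂ)) =O[atTop] fun t => t ^ (-0 : ℝ) :=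
    .of_bound C (.of_forall fun t => by simpa using hC t)
  have hre : (1 - s - k : ℂ).re < 0 := by
    simp only [Complex.sub_re, Complex.one_re, Complex.natCast_re]
    linarith
  have hdiff := (differentiableAt_integral_Ioi_cpow_smul ha hloc hbdd hre).comp s
    (f := fun z => 1 - z - (k : ℂ)) (by fun_prop)
  refine hdiff.congr_of_eventuallyEq (.of_forall fun z => ?_)
  simp only [Function.comp_apply, smul_eq_mul, mul_comm (Complex.ofReal _)]
  ring_nf

theorem differentiableAt_zetaTailCorrection {N K : ℕ} (hN : 1 ≤ N) {s : ℂ}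
    (hs : -(K : ℝ) + 1 < s.re) : DifferentiableAt ℂ (zetaTailCorrection N K) s := by
  have hN0 : N ≠ 0 := Nat.one_le_iff_ne_zero.mp hN
  have hint := differentiableAt_integral_Ioi_bernoulliFun_fract_mul_cpow
    (Nat.cast_pos.mpr hN : (0 : ℝ) < N) hs
  refine .sub (.fun_sum fun k _ => ?_) (.mul (by fun_prop) hint)
  exact .mul (by fun_prop) (differentiable_natCast_cpow hN0 (by fun_prop) s)

theorem riemannZeta_sub_eq_div_add_iff {s : ℂ} (hs : s ≠ 1) (a b c : ℂ) :
    riemannZeta s - a = b / (s - 1) + c ↔ riemannZeta₁ s - (s - 1) * a = b + (s - 1) * c := by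
  have hs' : s - 1 ≠ 0 := sub_ne_zero.mpr hs
  rw [riemannZeta_eq_inv_sub_mul hs, ← mul_right_inj' hs']
  field_simp

theorem riemannZeta_sub_sum_Icc_eq {N K : ℕ} (hN : 1 ≤ N) (hK : 1 ≤ K) {s : ℂ}
    (hs : -(K : ℝ) + 1 < s.re) (hs1 : s ≠ 1) :
    riemannZeta s - ∑ n ∈ Finset.Icc 1 N, (n : ℂ) ^ (-s) =
      (N : ℂ) ^ (1 - s) / (s - 1) + zetaTailCorrection N K s := by
  set U : Set ℂ := {z | -(K : ℝ) + 1 < z.re}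
  have hU : IsOpen U := isOpen_lt continuous_const Complex.continuous_re
  have h2 : (2 : ℂ) ∈ U := by
    simp only [U, mem_ofPred_eq, Complex.re_ofNat]; linarith [K.cast_nonneg (α := ℝ)]
  have htail : Differentiable ℂ
      fun z => riemannZeta₁ z - (z - 1) * ∑ n ∈ Finset.Icc 1 N, (n : ℂ) ^ (-z) :=
    differentiable_riemannZeta₁.sub (.mul (by fun_prop) (.fun_sum fun n hn =>
      differentiable_natCast_cpow (Nat.one_le_iff_ne_zero.mp (Finset.mem_Icc.mp hn).1)
        (by fun_prop)))
  have hexpansion : DifferentiableOn ℂ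
      (fun z => (N : ℂ) ^ (1 - z) + (z - 1) * zetaTailCorrection N K z) U := fun z hz =>
    (DifferentiableAt.add (differentiable_natCast_cpow (Nat.one_le_iff_ne_zero.mp hN)
      (by fun_prop) z) (.mul (by fun_prop)
        (differentiableAt_zetaTailCorrection hN hz))).differentiableWithinAt
  rw [riemannZeta_sub_eq_div_add_iff hs1]
  refine (htail.differentiableOn.analyticOnNhd hU).eqOn_of_preconnected_of_eventuallyEq
    (hexpansion.analyticOnNhd hU) (convex_halfSpace_re_gt _).isPreconnected h2 ?_ hs
  filter_upwards [(isOpen_lt continuous_const Complex.continuous_re).mem_nhds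
    (show (1 : ℝ) < (2 : ℂ).re by norm_num)] with z (hz : 1 < z.re)
  exact (riemannZeta_sub_eq_div_add_iff (ne_of_apply_ne Complex.re hz.ne') _ _ _).mp
    (riemannZeta_sub_sum_Icc_eq_of_one_lt_re hN hK hz)

end Zeta

/-- Euler–Maclaurin expansion of the tail of the Riemann zeta function: for
`N ≥ 1`, `K ≥ 1`, `Re s > −K+1`, `s ≠ 1`,
`ζ(s) − ∑_{n=1}^N n^{−s} = N^{1−s}/(s−1) + ∑_{k=1}^K C(s+k−2,k−1)·(B_k/k)·N^{−s−k+1}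
  − C(s+K−1,K) ∫_N^∞ B_K({t}) t^{−s−K} dt`. -/
theorem zeta_tail_euler_maclaurin (N K : ℕ) (hN : 1 ≤ N) (hK : 1 ≤ K) (s : ℂ)
    (hs : -(K:ℝ) + 1 < s.re) (hs1 : s ≠ 1) :
    riemannZeta s - (∑ n ∈ Finset.Icc 1 N, (n:ℂ) ^ (-s)) =
      (N:ℂ) ^ (1 - s) / (s - 1)
      + (∑ k ∈ Finset.Icc 1 K,
          ((∏ j ∈ Finset.range (k-1), (s + (j:ℂ))) / (Nat.factorial (k-1)))
            * (((bernoulli k : ℚ) : ℂ) / (k:ℂ)) * (N:ℂ) ^ (-s - (k:ℂ) + 1))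
      - ((∏ j ∈ Finset.range K, (s + (j:ℂ))) / (Nat.factorial K))
          * ∫ t in Set.Ioi (N:ℝ),
              ((Polynomial.aeval (Int.fract t) (Polynomial.bernoulli K) : ℝ) : ℂ)
                * (t:ℂ) ^ (-s - (K:ℂ)) := by
  have hB (t : ℝ) : aeval t (Polynomial.bernoulli K) = bernoulliFun K t := by
    rw [bernoulliFun, eval_map_algebraMap]
  simp only [hB, add_sub_assoc]
  exact riemannZeta_sub_sum_Icc_eq hN hK hs hs1
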